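/- Let M = M⁰(G,n,m;P) be a finite regular Rees matrix semigroup over a finite group G which is CS-diagonal, and let k be the number of equivalence classes of the relation ~ on {1,…,n}. Then there exists a finite nilpotent group H such that M/η* is isomorphic, as a semigroup, to M⁰(H,k,k;I_k), where I_k is the k×k identity sandwich matrix (entries equal to the identity of H on the diagonal and θ elsewhere). -/

import Mathlib

/-!
CS-diagonality says that, after grouping rows by `~`, an entry `p_{j,i}` is nonzero exactly when the
column `j` and the row `i` carry the same one of `k` labels (`exists_blockData`).

* **Upper bound.** Two idempotents of `M` sharing a row or a column index form a left or right zero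
  band, so they are related by `η₂` (with `z₁ = z₂ = 1`). Translating, every nonzero element is
  `η*`-related to an element of the copy `E c d x = (w_c⁻¹ x; r_c, s_d)` of `M⁰(G,k,k;I_k)`, where
  `r_c`, `s_c` represent the label `c` and `w_c = p_{s_c,r_c}` (`exists_etaStar_E`).
* **Lower bound.** The relation "both zero, or nonzero with equal row and column labels" is a
  congruence (`tagCon`) containing every `η_n`, because a zero occurring among `λ₁, ρ₁, λ₂, ρ₂` would
  persist. So `η*` never merges distinct labels, nor a nonzero element with zero.

Hence `M/η* ≅ M⁰(H,k,k;I_k)`, where `H` is the quotient of `G` by the congruence that `η*` induces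
on a diagonal block `E c c`.

Nilpotency of `H`: among the first `|G|² + 1` pairs `(λ_t, ρ_t)` in `G` one repeats, which gives an
`η`-relation and forces `λ = ρ` in `H` from then on. So `H` satisfies a Mal'cev identity. In a group,
`q_t = λ_t ρ_t⁻¹` satisfies `q_{t+1} = ⁅λ_t z_{t+1}, q_t⁻¹⁆` with an arbitrary first entry, so the
identity of length `N` puts every element in the `N`-th term of the upper central series.
-/


/-! Common definitions: Mal'cev nilpotency, the relations η_n, η, the congruence η*,
Rees matrix semigroups (with and without zero), regularity, CS-diagonality,
the row relation ~, ideals, principal series and Rees factor isomorphisms. -/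

/-- The pair `(λ_n, ρ_n)` of Mal'cev words in a monoid, with `λ₀ = x`, `ρ₀ = y`,
`λ_{k+1} = λ_k * z (k+1) * ρ_k` and `ρ_{k+1} = ρ_k * z (k+1) * λ_k`. -/
def malcev {M : Type*} [Monoid M] (x y : M) (z : ℕ → M) : ℕ → M × M
  | 0 => (x, y)
  | k + 1 =>
      ((malcev x y z k).1 * z (k + 1) * (malcev x y z k).2,
       (malcev x y z k).2 * z (k + 1) * (malcev x y z k).1)

/-- A semigroup `S` is Mal'cev nilpotent if for some positive `n`,
`λ_n(a,b,c₁,…,c_n) = ρ_n(a,b,c₁,…,c_n)` for all `a b ∈ S` and all `cᵢ ∈ S¹`,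
where `S¹ = WithOne S`. -/
def MalcevNilpotent (S : Type*) [Semigroup S] : Prop :=
  ∃ n : ℕ, 0 < n ∧ ∀ (a b : S) (z : ℕ → WithOne S),
    (malcev (a : WithOne S) (b : WithOne S) z n).1 =
    (malcev (a : WithOne S) (b : WithOne S) z n).2

/-- The relation `η_n` on a semigroup `S`: `η₁` is the diagonal, and for `n > 1`,
`x η_n y` iff there are `z₁, …, z_n ∈ S¹` with `x = λ_n(x,y,z₁,…,z_n)` and
`y = ρ_n(x,y,z₁,…,z_n)`. -/
def etaN (S : Type*) [Semigroup S] (n : ℕ) (x y : S) : Prop :=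
  (n = 1 ∧ x = y) ∨
  (1 < n ∧ ∃ z : ℕ → WithOne S,
    (x : WithOne S) = (malcev (x : WithOne S) (y : WithOne S) z n).1 ∧
    (y : WithOne S) = (malcev (x : WithOne S) (y : WithOne S) z n).2)

/-- `η`, the transitive closure of the union of the relations `η_n`, `n ≥ 1`. -/
def eta (S : Type*) [Semigroup S] : S → S → Prop :=
  Relation.TransGen (fun x y => ∃ n, 1 ≤ n ∧ etaN S n x y)

/-- `η*`, the smallest congruence on `S` containing `η`. -/
def etaStar (S : Type*) [Semigroup S] : Con S :=
  conGen (eta S)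

/-- A semigroup is an inverse semigroup if every element has exactly one inverse. -/
def IsInverseSemigroup (S : Type*) [Semigroup S] : Prop :=
  ∀ x : S, ∃! y : S, x * y * x = x ∧ y * x * y = y

/-- A semigroup is completely regular if every element lies in a subgroup:
for every `a` there is `b` with `aba = a`, `ab = ba` and `bab = b`. -/
def IsCompletelyRegular (S : Type*) [Semigroup S] : Prop :=
  ∀ a : S, ∃ b : S, a * b * a = a ∧ a * b = b * a ∧ b * a * b = b

/-- A (possibly empty) two-sided ideal of a semigroup. -/
def IsIdeal (S : Type*) [Semigroup S] (I : Set S) : Prop :=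
  ∀ s : S, ∀ x ∈ I, s * x ∈ I ∧ x * s ∈ I

/-- The Rees matrix semigroup `M⁰(G, n, m; P)` with zero `theta`; the sandwich
matrix entry `P j i : Option G` is `none` when the entry is `θ`. -/
inductive ReesMatrix (G : Type*) (n m : ℕ) (P : Fin m → Fin n → Option G) where
  | theta : ReesMatrix G n m P
  | elem (g : G) (i : Fin n) (j : Fin m) : ReesMatrix G n m P

namespace ReesMatrix

variable {G : Type*} [Group G] {n m : ℕ} {P : Fin m → Fin n → Option G}

/-- Multiplication: `(g;i,j)(h;k,l) = (g p_{j,k} h; i, l)` if `p_{j,k} ≠ θ`,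
and all other products are `θ`. -/
def mul : ReesMatrix G n m P → ReesMatrix G n m P → ReesMatrix G n m P
  | elem g i j, elem h k l =>
      match P j k with
      | some p => elem (g * p * h) i l
      | none => theta
  | _, _ => theta

instance : Semigroup (ReesMatrix G n m P) where
  mul := mul
  mul_assoc a b c := by
    show mul (mul a b) c = mul a (mul b c)
    rcases a with _ | ⟨g, i, j⟩ <;> rcases b with _ | ⟨h, k, l⟩ <;>
      rcases c with _ | ⟨f, r, s⟩
    all_goals try rfl
    · rcases hjk : P j k with _ | p <;> simp [mul, hjk]
    · rcases hjk : P j k with _ | p <;> rcases hlr : P l r with _ | q <;>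
        simp [mul, hjk, hlr, mul_assoc]

theorem mul_def (a b : ReesMatrix G n m P) : a * b = mul a b := rfl

instance [Finite G] : Finite (ReesMatrix G n m P) := by
  have := Fintype.ofFinite G
  exact Finite.of_surjective
    (fun x : Option (G × Fin n × Fin m) =>
      match x with
      | none => (theta : ReesMatrix G n m P)
      | some (g, i, j) => elem g i j)
    (by rintro (_ | ⟨g, i, j⟩)
        · exact ⟨none, rfl⟩
        · exact ⟨some (g, i, j), rfl⟩)

end ReesMatrix

/-- `P` is regular: every row and every column of the sandwich matrix has a
nonzero entry. -/
def IsRegularSandwich {G : Type*} {n m : ℕ} (P : Fin m → Fin n → Option G) : Prop :=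
  (∀ i : Fin n, ∃ j : Fin m, P j i ≠ none) ∧ (∀ j : Fin m, ∃ i : Fin n, P j i ≠ none)

/-- `P` is CS-diagonal: whenever `p_{r,t}`, `p_{r',t}` and `p_{r,t'}` are all
nonzero, so is `p_{r',t'}`. -/
def IsCSDiagonal {G : Type*} {n m : ℕ} (P : Fin m → Fin n → Option G) : Prop :=
  ∀ (r r' : Fin m) (t t' : Fin n),
    P r t ≠ none → P r' t ≠ none → P r t' ≠ none → P r' t' ≠ none

/-- The relation `~` on rows: `i ~ i'` iff some column `j` has `p_{j,i} ≠ θ`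
and `p_{j,i'} ≠ θ`. -/
def rowRel {G : Type*} {n m : ℕ} (P : Fin m → Fin n → Option G) (i i' : Fin n) : Prop :=
  ∃ j : Fin m, P j i ≠ none ∧ P j i' ≠ none

/-- The completely simple Rees matrix semigroup `M(G, n, m; P)` (without zero),
all sandwich entries lying in `G`. -/
inductive ReesMatrixCS (G : Type*) (n m : ℕ) (P : Fin m → Fin n → G) where
  | elem (g : G) (i : Fin n) (j : Fin m) : ReesMatrixCS G n m P

namespace ReesMatrixCS

variable {G : Type*} [Group G] {n m : ℕ} {P : Fin m → Fin n → G}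

instance : Semigroup (ReesMatrixCS G n m P) where
  mul a b := match a, b with
    | elem g i j, elem h k l => elem (g * P j k * h) i l
  mul_assoc a b c := by
    rcases a with ⟨g, i, j⟩; rcases b with ⟨h, k, l⟩; rcases c with ⟨f, r, s⟩
    show elem _ _ _ = elem _ _ _
    simp [mul_assoc]

instance [Finite G] : Finite (ReesMatrixCS G n m P) := by
  have := Fintype.ofFinite G
  exact Finite.of_surjective
    (fun x : G × Fin n × Fin m => elem x.1 x.2.1 x.2.2)
    (by rintro ⟨g, i, j⟩; exact ⟨(g, i, j), rfl⟩)

end ReesMatrixCS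

/-- A principal series of a finite semigroup `S`:
`S = C 1 ⊃ C 2 ⊃ … ⊃ C o ⊃ C (o+1) = ∅`, each `C p` an ideal of `S` with
no ideal of `S` strictly between consecutive terms. -/
structure PrincipalSeries (S : Type*) [Semigroup S] where
  o : ℕ
  ho : 1 ≤ o
  C : ℕ → Set S
  first : C 1 = Set.univ
  last : C (o + 1) = ∅
  isIdeal : ∀ p, 1 ≤ p → p ≤ o → IsIdeal S (C p)
  strict : ∀ p, 1 ≤ p → p ≤ o → C (p + 1) ⊂ C p
  max : ∀ p, 1 ≤ p → p ≤ o → ∀ I : Set S, IsIdeal S I →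
    C (p + 1) ⊆ I → I ⊆ C p → I = C (p + 1) ∨ I = C p

/-- `f` realises the Rees factor `A/B` (the Rees quotient of `A` by the ideal `B`;
if `B = ∅` the factor is `A` itself) as the Rees matrix semigroup with zero
`M⁰(H, n', m'; Q)`. -/
def IsReesFactorM0 {S : Type*} [Semigroup S] (A B : Set S)
    {H : Type*} [Group H] {n' m' : ℕ} (Q : Fin m' → Fin n' → Option H)
    (f : S → ReesMatrix H n' m' Q) : Prop :=
  (∀ x ∈ A, ∀ y ∈ A, f (x * y) = f x * f y) ∧
  ((B = ∅ ∧ Set.BijOn f A Set.univ) ∨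
   (B ≠ ∅ ∧ (∀ x ∈ B, f x = ReesMatrix.theta) ∧
     (∀ x ∈ A \ B, f x ≠ ReesMatrix.theta) ∧
     Set.InjOn f (A \ B) ∧
     (∀ w : ReesMatrix H n' m' Q, w ≠ ReesMatrix.theta → ∃ x ∈ A \ B, f x = w)))

/-- `f` realises `A` as the completely simple Rees matrix semigroup
`M(H, n', m'; Q)` (without zero). -/
def IsReesFactorCS {S : Type*} [Semigroup S] (A : Set S)
    {H : Type*} [Group H] {n' m' : ℕ} (Q : Fin m' → Fin n' → H)
    (f : S → ReesMatrixCS H n' m' Q) : Prop :=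
  (∀ x ∈ A, ∀ y ∈ A, f (x * y) = f x * f y) ∧ Set.BijOn f A Set.univ

/-! ### Mal'cev words in groups -/

theorem malcev_add {M : Type*} [Monoid M] (x y : M) (z : ℕ → M) (s t : ℕ) :
    malcev x y z (s + t) =
      malcev (malcev x y z s).1 (malcev x y z s).2 (fun u => z (s + u)) t := by
  induction t with
  | zero => rfl
  | succ t ih => rw [← add_assoc, malcev, malcev, ih, add_assoc]

theorem malcev_map {M N : Type*} [Monoid M] [Monoid N] (f : M → N)
    (hf : ∀ a b, f (a * b) = f a * f b) (x y : M) (z : ℕ → M) (t : ℕ) :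
    malcev (f x) (f y) (fun u => f (z u)) t = (f (malcev x y z t).1, f (malcev x y z t).2) := by
  induction t with
  | zero => rfl
  | succ t ih => simp only [malcev, ih, hf]

theorem malcev_diag {M : Type*} [Monoid M] (x : M) (z : ℕ → M) (t : ℕ) :
    (malcev x x z t).1 = (malcev x x z t).2 := by
  induction t with
  | zero => rfl
  | succ t ih => simp only [malcev, ih]

/-- The entry `z 0` plays no role in the Mal'cev words. -/
theorem malcev_congr {M : Type*} [Monoid M] (x y : M) {z z' : ℕ → M}
    (h : ∀ u, z (u + 1) = z' (u + 1)) (t : ℕ) : malcev x y z t = malcev x y z' t := by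
  induction t with
  | zero => rfl
  | succ t ih => simp only [malcev, ih, h]

/-- If all Mal'cev words of length `N` starting from `(x, y)` agree, then `x y⁻¹` lies in the `N`-th
term of the upper central series. -/
theorem mem_upperCentralSeries_of_malcev {H : Type*} [Group H] (N : ℕ) :
    ∀ x y : H, (∀ z : ℕ → H, (malcev x y z N).1 = (malcev x y z N).2) →
      x * y⁻¹ ∈ Subgroup.upperCentralSeries H N := by
  induction N with
  | zero =>
    intro x y h
    have hxy : x = y := h 1
    simp [hxy]
  | succ N ih =>
    intro x y h
    rw [← inv_mem_iff, Subgroup.mem_upperCentralSeries_succ_iff]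
    intro v
    -- With `z₁ = x⁻¹ v`, the quotient `λ₁ ρ₁⁻¹` is the commutator of `v` and `(x y⁻¹)⁻¹`.
    have key := ih (x * (x⁻¹ * v) * y) (y * (x⁻¹ * v) * x) (fun z => by
      have := h (fun u => if u = 1 then x⁻¹ * v else z (u - 1))
      rw [add_comm, malcev_add] at this
      rw [malcev_congr (z := fun u => if 1 + u = 1 then x⁻¹ * v else z (1 + u - 1)) (z' := z)
        (h := fun u => by simp [Nat.add_comm 1])] at this
      simpa [malcev] using this)
    rw [← inv_mem_iff] at key
    convert key using 1
    simp only [commutatorElement_def]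
    group

/-- If every pair lying on a Mal'cev cycle of length `> 1` in the finite group `G` is merged in its
quotient `H`, then `H` is nilpotent. -/
theorem isNilpotent_of_malcev_cycles {G H : Type*} [Group G] [Finite G] [Group H] (π : G →* H)
    (hπ : Function.Surjective π)
    (hcyc : ∀ (x y : G) (z : ℕ → G) (t : ℕ), 1 < t → malcev x y z t = (x, y) → π x = π y) :
    Group.IsNilpotent H := by
  have : Fintype G := Fintype.ofFinite G
  refine ⟨Fintype.card (G × G), (Subgroup.eq_top_iff' _).2 fun q => ?_⟩
  rw [← mul_one q, ← inv_one]
  refine mem_upperCentralSeries_of_malcev _ _ _ fun z => ?_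
  obtain ⟨x, rfl⟩ := hπ q
  choose σ hσ using hπ
  obtain ⟨Z, rfl⟩ : ∃ Z : ℕ → G, z = fun u => π (Z u) :=
    ⟨fun u => σ (z u), funext fun u => (hσ (z u)).symm⟩
  rw [← map_one π]
  -- By the pigeonhole principle a pair repeats, at two times `a < b`.
  obtain ⟨a, b, hab, hb, heq⟩ : ∃ a b : ℕ, a < b ∧ b ≤ Fintype.card (G × G) ∧
      malcev x 1 Z a = malcev x 1 Z b := by
    obtain ⟨a, b, hne, heq⟩ := Fintype.exists_ne_map_eq_of_card_lt
      (fun t : Fin (Fintype.card (G × G) + 1) => malcev x 1 Z t) (by simp)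
    rcases lt_or_gt_of_ne hne with h | h
    · exact ⟨a, b, h, Nat.lt_succ_iff.1 b.2, heq⟩
    · exact ⟨b, a, h, Nat.lt_succ_iff.1 a.2, heq.symm⟩
  obtain ⟨p, rfl⟩ := Nat.exists_eq_add_of_lt hab
  rw [add_assoc, malcev_add] at heq
  have hmerge : π (malcev x 1 Z a).1 = π (malcev x 1 Z a).2 := by
    -- A cycle of length one is run through twice.
    rcases p with _ | p
    · refine hcyc _ _ (fun _ => Z (a + 1)) 2 one_lt_two ?_
      have h1 : malcev (malcev x 1 Z a).1 (malcev x 1 Z a).2 (fun _ => Z (a + 1)) 1 =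
        malcev x 1 Z a := heq.symm
      rw [show 2 = 1 + 1 from rfl, malcev_add, h1]
      exact h1
    · exact hcyc _ _ _ (p + 1 + 1) (by omega) heq.symm
  obtain ⟨r, hr⟩ := Nat.exists_eq_add_of_le (hab.le.trans hb)
  rw [hr, malcev_add, malcev_map π (map_mul π), hmerge]
  exact malcev_diag _ _ _

/-! ### Labels of rows and columns -/

/-- Labels in `Fin k` for the rows and the columns of the sandwich matrix `P`, such that an entry is
nonzero exactly when its row and its column have the same label, together with representatives
`r c`, `s c` of each label and the nonzero entry `w c` at their intersection. -/
structure BlockData {G : Type*} {n m : ℕ} (P : Fin m → Fin n → Option G) (k : ℕ) where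
  row : Fin n → Fin k
  col : Fin m → Fin k
  ne_none_iff : ∀ j i, P j i ≠ none ↔ col j = row i
  r : Fin k → Fin n
  s : Fin k → Fin m
  w : Fin k → G
  row_r : ∀ c, row (r c) = c
  col_s : ∀ c, col (s c) = c
  P_sr : ∀ c, P (s c) (r c) = some (w c)

theorem exists_blockData {G : Type*} {n m : ℕ} (P : Fin m → Fin n → Option G)
    (hreg : IsRegularSandwich P) (hdiag : IsCSDiagonal P) :
    Nonempty (BlockData P (Nat.card (Quot (rowRel P)))) := by
  have hequiv : Equivalence (rowRel P) :=
    ⟨fun i => (hreg.1 i).imp fun j hj => ⟨hj, hj⟩, fun ⟨j, h1, h2⟩ => ⟨j, h2, h1⟩,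
      fun {a b c} ⟨j, h1, h2⟩ ⟨j', h3, h4⟩ => ⟨j', hdiag j j' b a h2 h3 h1, h4⟩⟩
  let e : Quot (rowRel P) ≃ Fin (Nat.card (Quot (rowRel P))) := Finite.equivFin _
  let row : Fin n → Fin (Nat.card (Quot (rowRel P))) := fun i => e (Quot.mk _ i)
  have hrow : ∀ i i', row i = row i' ↔ rowRel P i i' := fun i i' => by
    rw [e.apply_eq_iff_eq, Quot.eq, hequiv.eqvGen_iff]
  choose t ht using hreg.2
  have hne : ∀ j i, P j i ≠ none ↔ row (t j) = row i := fun j i => by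
    rw [hrow]
    refine ⟨fun h => ⟨j, ht j, h⟩, fun ⟨j', h1, h2⟩ => hdiag j' j (t j) i h1 (ht j) h2⟩
  have hsurj : Function.Surjective row := e.surjective.comp Quot.mk_surjective
  choose r hr using hsurj
  choose s hs using fun c => hreg.1 (r c)
  choose w hw using fun c => Option.ne_none_iff_exists'.1 (hs c)
  exact ⟨row, fun j => row (t j), hne, r, s, w, hr,
    fun c => by rw [(hne _ _).1 (hs c), hr], hw⟩

namespace ReesMatrix

variable {G : Type*} [Group G] {n m k : ℕ} {P : Fin m → Fin n → Option G}

theorem elem_mul_elem {j : Fin m} {i' : Fin n} {p : G} (h : P j i' = some p) (g g' : G)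
    (i : Fin n) (j' : Fin m) :
    (elem g i j : ReesMatrix G n m P) * elem g' i' j' = elem (g * p * g') i j' := by
  simp [mul_def, mul, h]

theorem elem_mul_elem_none {j : Fin m} {i' : Fin n} (h : P j i' = none) (g g' : G)
    (i : Fin n) (j' : Fin m) :
    (elem g i j : ReesMatrix G n m P) * elem g' i' j' = theta := by
  simp [mul_def, mul, h]

theorem theta_mul (x : ReesMatrix G n m P) : theta * x = theta := by
  cases x <;> rfl

theorem mul_theta (x : ReesMatrix G n m P) : x * theta = theta := by
  cases x <;> rfl

/-! ### The lower bound: `η*` preserves labels -/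

/-- The pair of labels of a nonzero element; `none` for the zero element. -/
def tag (D : BlockData P k) : ReesMatrix G n m P → Option (Fin k × Fin k)
  | theta => none
  | elem _ i j => some (D.row i, D.col j)

theorem elem_mul_elem_cases (D : BlockData P k) (g g' : G) (i i' : Fin n) (j j' : Fin m) :
    (D.col j = D.row i' ∧
      ∃ h, (elem g i j : ReesMatrix G n m P) * elem g' i' j' = elem h i j') ∨
    (D.col j ≠ D.row i' ∧ (elem g i j : ReesMatrix G n m P) * elem g' i' j' = theta) := by
  by_cases h : P j i' = none
  · exact .inr ⟨fun e => (D.ne_none_iff j i').2 e h, elem_mul_elem_none h ..⟩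
  · obtain ⟨p, hp⟩ := Option.ne_none_iff_exists'.1 h
    exact .inl ⟨(D.ne_none_iff j i').1 h, _, elem_mul_elem hp ..⟩

/-- The congruence relating elements with the same labels. -/
def tagCon (D : BlockData P k) : Con (ReesMatrix G n m P) where
  r x y := tag D x = tag D y
  iseqv := ⟨fun _ => rfl, Eq.symm, Eq.trans⟩
  mul' := by
    rintro (_ | ⟨g, i, j⟩) (_ | ⟨g', i', j'⟩) (_ | ⟨h, a, b⟩) (_ | ⟨h', a', b'⟩) h1 h2 <;>
      simp only [tag, theta_mul, mul_theta, reduceCtorEq, Option.some.injEq, Prod.mk.injEq]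
        at h1 h2 ⊢
    rcases elem_mul_elem_cases D g h i a j b with ⟨e1, u, hu⟩ | ⟨e1, hu⟩ <;>
    rcases elem_mul_elem_cases D g' h' i' a' j' b' with ⟨e2, v, hv⟩ | ⟨e2, hv⟩ <;>
    simp_all

theorem tagCon_iff (D : BlockData P k) (x y : ReesMatrix G n m P) :
    tagCon D x y ↔ tag D x = tag D y := Iff.rfl

theorem coe_theta_mul (z : WithOne (ReesMatrix G n m P)) :
    ((theta : ReesMatrix G n m P) : WithOne (ReesMatrix G n m P)) * z =
      (theta : ReesMatrix G n m P) := by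
  induction z using WithOne.recOneCoe with
  | one => simp
  | coe z => rw [← WithOne.coe_mul, theta_mul]

theorem mul_coe_theta (z : WithOne (ReesMatrix G n m P)) :
    z * ((theta : ReesMatrix G n m P) : WithOne (ReesMatrix G n m P)) =
      (theta : ReesMatrix G n m P) := by
  induction z using WithOne.recOneCoe with
  | one => simp
  | coe z => rw [← WithOne.coe_mul, mul_theta]

/-- Once zero, a Mal'cev pair stays zero. -/
theorem malcev_theta (x y : WithOne (ReesMatrix G n m P)) (z : ℕ → WithOne (ReesMatrix G n m P))
    (h : x = (theta : ReesMatrix G n m P) ∨ y = (theta : ReesMatrix G n m P)) (t : ℕ) :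
    malcev x y z (t + 1) =
      (((theta : ReesMatrix G n m P) : WithOne (ReesMatrix G n m P)),
        ((theta : ReesMatrix G n m P) : WithOne (ReesMatrix G n m P))) := by
  induction t with
  | zero => rcases h with rfl | rfl <;> simp [malcev, coe_theta_mul, mul_coe_theta]
  | succ t ih => rw [malcev, ih]; simp [coe_theta_mul, mul_coe_theta]

/-- A nonzero product `x z y` of nonzero elements `x`, `y` with a `z ∈ S¹` keeps the outer indices;
the labels around `z` match, or those of `x` and `y` do if `z = 1`. -/
theorem elem_mul_mul_elem (D : BlockData P k) (g g' : G) (i i' : Fin n) (j j' : Fin m)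
    (z : WithOne (ReesMatrix G n m P))
    (hz : ((elem g i j : ReesMatrix G n m P) : WithOne (ReesMatrix G n m P)) * z *
      (elem g' i' j' : ReesMatrix G n m P) ≠ (theta : ReesMatrix G n m P)) :
    (∃ h, ((elem g i j : ReesMatrix G n m P) : WithOne (ReesMatrix G n m P)) * z *
      (elem g' i' j' : ReesMatrix G n m P) = (elem h i j' : ReesMatrix G n m P)) ∧
    ((z = 1 ∧ D.col j = D.row i') ∨
      ∃ q a b, z = (elem q a b : ReesMatrix G n m P) ∧ D.col j = D.row a ∧ D.col b = D.row i') := by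
  induction z using WithOne.recOneCoe with
  | one =>
    rw [mul_one, ← WithOne.coe_mul] at hz ⊢
    rcases elem_mul_elem_cases D g g' i i' j j' with ⟨e, h, hh⟩ | ⟨e, hh⟩
    · exact ⟨⟨h, by rw [hh]⟩, .inl ⟨rfl, e⟩⟩
    · exact absurd (by rw [hh]) hz
  | coe z =>
    rw [← WithOne.coe_mul, ← WithOne.coe_mul] at hz ⊢
    rcases z with _ | ⟨q, a, b⟩
    · exact absurd (by rw [mul_theta, theta_mul]) hz
    rcases elem_mul_elem_cases D g q i a j b with ⟨e, h, hh⟩ | ⟨e, hh⟩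
    · rcases elem_mul_elem_cases D h g' i i' b j' with ⟨e', h', hh'⟩ | ⟨e', hh'⟩
      · exact ⟨⟨h', by rw [hh, hh']⟩, .inr ⟨q, a, b, rfl, e, e'⟩⟩
      · exact absurd (by rw [hh, hh']) hz
    · exact absurd (by rw [hh, theta_mul]) hz

theorem tag_eq_of_etaN (D : BlockData P k) {t : ℕ} {x y : ReesMatrix G n m P}
    (h : etaN (ReesMatrix G n m P) t x y) : tag D x = tag D y := by
  rcases h with ⟨_, rfl⟩ | ⟨ht, z, hx, hy⟩
  · rfl
  obtain ⟨t, rfl⟩ : ∃ u, t = 2 + u := Nat.exists_eq_add_of_le ht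
  by_cases h0 : x = theta ∨ y = theta
  · have h0' : (x : WithOne (ReesMatrix G n m P)) = (theta : ReesMatrix G n m P) ∨
        (y : WithOne (ReesMatrix G n m P)) = (theta : ReesMatrix G n m P) :=
      h0.imp (congrArg _) (congrArg _)
    rw [show 2 + t = t + 1 + 1 by omega, malcev_theta _ _ _ h0'] at hx hy
    rw [WithOne.coe_inj.1 hx, WithOne.coe_inj.1 hy]
  push Not at h0
  -- Neither component is zero before the last step, as zeros would persist up to `(x, y)`.
  have hstep : ∀ u v, u + (v + 1) = 2 + t →
      (malcev (x : WithOne _) (y : WithOne _) z u).1 ≠ (theta : ReesMatrix G n m P) ∧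
      (malcev (x : WithOne _) (y : WithOne _) z u).2 ≠ (theta : ReesMatrix G n m P) := by
    intro u v huv
    by_contra hcon
    rw [← huv, malcev_add, malcev_theta _ _ _ (by tauto)] at hx
    exact h0.1 (WithOne.coe_inj.1 hx)
  have h1 := hstep 1 t (by omega)
  have h2 : (malcev (x : WithOne _) (y : WithOne _) z 2).1 ≠ (theta : ReesMatrix G n m P) ∧
      (malcev (x : WithOne _) (y : WithOne _) z 2).2 ≠ (theta : ReesMatrix G n m P) := by
    rcases t with _ | t
    · exact ⟨fun e => h0.1 (WithOne.coe_inj.1 (hx.trans e)),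
        fun e => h0.2 (WithOne.coe_inj.1 (hy.trans e))⟩
    · exact hstep 2 t (by omega)
  rcases x with _ | ⟨g, i, j⟩
  · exact absurd rfl h0.1
  rcases y with _ | ⟨g', i', j'⟩
  · exact absurd rfl h0.2
  obtain ⟨⟨a, ha⟩, h3⟩ := elem_mul_mul_elem D _ _ _ _ _ _ _ h1.1
  obtain ⟨⟨b, hb⟩, h4⟩ := elem_mul_mul_elem D _ _ _ _ _ _ _ h1.2
  simp only [malcev, zero_add, ha, hb] at h2
  obtain ⟨-, h5⟩ := elem_mul_mul_elem D _ _ _ _ _ _ _ h2.1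
  obtain ⟨-, h6⟩ := elem_mul_mul_elem D _ _ _ _ _ _ _ h2.2
  simp only [tag, Option.some.injEq, Prod.mk.injEq]
  -- If `z₁ = 1`, the labels of `x` and `y` are `(c, d)` and `(d, c)`, and step two forces `c = d`;
  -- otherwise the labels of `z₁` determine both pairs.
  rcases h3 with ⟨e3, f3⟩ | ⟨q, c, d, e3, f3, f3'⟩
  · rcases h4 with ⟨e4, f4⟩ | ⟨q', c', d', e4, f4, f4'⟩
    · rcases h5 with ⟨e5, f5⟩ | ⟨q, c, d, e5, f5, f5'⟩
      · grind
      · rcases h6 with ⟨e6, f6⟩ | ⟨q', c', d', e6, f6, f6'⟩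
        · grind
        · rw [e5] at e6
          cases WithOne.coe_inj.1 e6
          grind
    · rw [e3] at e4
      exact absurd e4 WithOne.one_ne_coe
  · rcases h4 with ⟨e4, f4⟩ | ⟨q', c', d', e4, f4, f4'⟩
    · rw [e3] at e4
      exact absurd e4 WithOne.coe_ne_one
    · rw [e3] at e4
      cases WithOne.coe_inj.1 e4
      grind

theorem tag_eq_of_etaStar (D : BlockData P k) {x y : ReesMatrix G n m P}
    (h : etaStar (ReesMatrix G n m P) x y) : tag D x = tag D y := by
  have hle : etaStar (ReesMatrix G n m P) ≤ tagCon D := by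
    refine Con.conGen_le.2 fun a b hab => ?_
    induction hab with
    | single h => exact tag_eq_of_etaN D h.choose_spec.2
    | tail _ h ih => exact (ih : tag D _ = tag D _).trans (tag_eq_of_etaN D h.choose_spec.2)
  exact hle h

/-! ### The upper bound: collapsing to one element of each block -/

theorem etaStar_of_etaN {S : Type*} [Semigroup S] {t : ℕ} (ht : 1 ≤ t) {x y : S}
    (h : etaN S t x y) : etaStar S x y :=
  ConGen.Rel.of _ _ (.single ⟨t, ht, h⟩)

/-- Elements forming a left zero band are `η*`-related. -/
theorem etaStar_of_left_zero {S : Type*} [Semigroup S] {x y : S} (h1 : x * y = x)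
    (h2 : y * x = y) : etaStar S x y := by
  refine etaStar_of_etaN one_le_two (.inr ⟨one_lt_two, fun _ => 1, ?_, ?_⟩) <;>
    simp [malcev, ← WithOne.coe_mul, h1, h2]

/-- Elements forming a right zero band are `η*`-related. -/
theorem etaStar_of_right_zero {S : Type*} [Semigroup S] {x y : S} (h1 : x * y = y)
    (h2 : y * x = x) : etaStar S x y := by
  refine etaStar_of_etaN one_le_two (.inr ⟨one_lt_two, fun _ => 1, ?_, ?_⟩) <;>
    simp [malcev, ← WithOne.coe_mul, h1, h2]

theorem etaStar_change_row {i i' : Fin n} {j : Fin m} {p p' : G} (hp : P j i = some p)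
    (hp' : P j i' = some p') (h : G) (l : Fin m) :
    etaStar (ReesMatrix G n m P) (elem (p⁻¹ * h) i l) (elem (p'⁻¹ * h) i' l) := by
  have hid : etaStar (ReesMatrix G n m P) (elem p⁻¹ i j) (elem p'⁻¹ i' j) := by
    apply etaStar_of_left_zero
    · rw [elem_mul_elem hp']; simp
    · rw [elem_mul_elem hp]; simp
  have := (etaStar (ReesMatrix G n m P)).mul hid
    ((etaStar (ReesMatrix G n m P)).refl (elem (p⁻¹ * h) i l))
  rw [elem_mul_elem hp, elem_mul_elem hp] at this
  convert this using 2 <;> group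

theorem etaStar_change_col {i : Fin n} {j j' : Fin m} {p p' : G} (hp : P j i = some p)
    (hp' : P j' i = some p') (h : G) (l : Fin n) :
    etaStar (ReesMatrix G n m P) (elem (h * p⁻¹) l j) (elem (h * p'⁻¹) l j') := by
  have hid : etaStar (ReesMatrix G n m P) (elem p⁻¹ i j) (elem p'⁻¹ i j') := by
    apply etaStar_of_right_zero
    · rw [elem_mul_elem hp]; simp
    · rw [elem_mul_elem hp']; simp
  have := (etaStar (ReesMatrix G n m P)).mul
    ((etaStar (ReesMatrix G n m P)).refl (elem (h * p⁻¹) l j)) hid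
  rw [elem_mul_elem hp, elem_mul_elem hp] at this
  convert this using 2 <;> group

/-- The nonzero elements of a copy of `M⁰(G,k,k;I_k)` inside `M`, with a left factor `(w c)⁻¹`
normalising the sandwich entries. -/
def E (D : BlockData P k) (c d : Fin k) (x : G) : ReesMatrix G n m P :=
  elem ((D.w c)⁻¹ * x) (D.r c) (D.s d)

theorem E_mul_E (D : BlockData P k) (c d e : Fin k) (x y : G) :
    E D c d x * E D d e y = E D c e (x * y) := by
  simp only [E]
  rw [elem_mul_elem (D.P_sr d)]
  congr 1
  group

theorem E_mul_E_of_ne (D : BlockData P k) {c d d' e : Fin k} (h : d ≠ d') (x y : G) :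
    E D c d x * E D d' e y = theta := by
  refine elem_mul_elem_none ?_ ..
  by_contra hne
  exact h (by simpa [D.row_r, D.col_s] using (D.ne_none_iff _ _).1 hne)

theorem tag_E (D : BlockData P k) (c d : Fin k) (x : G) : tag D (E D c d x) = some (c, d) := by
  simp [tag, E, D.row_r, D.col_s]

theorem exists_etaStar_E (D : BlockData P k) (g : G) (i : Fin n) (j : Fin m) :
    ∃ x, etaStar (ReesMatrix G n m P) (elem g i j) (E D (D.row i) (D.col j) x) := by
  obtain ⟨p, hp⟩ := Option.ne_none_iff_exists'.1
    ((D.ne_none_iff (D.s (D.row i)) i).2 (D.col_s _))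
  obtain ⟨q, hq⟩ := Option.ne_none_iff_exists'.1
    ((D.ne_none_iff j (D.r (D.col j))).2 (D.row_r _).symm)
  have h1 := etaStar_change_row hp (D.P_sr (D.row i)) (p * g) j
  have h2 := etaStar_change_col hq (D.P_sr (D.col j)) ((D.w (D.row i))⁻¹ * (p * g) * q)
    (D.r (D.row i))
  rw [inv_mul_cancel_left] at h1
  rw [mul_inv_cancel_right] at h2
  refine ⟨p * g * q * (D.w (D.col j))⁻¹, ?_⟩
  convert (etaStar (ReesMatrix G n m P)).trans h1 h2 using 2
  simp only [E, mul_assoc]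

/-- Whether `x` and `y` are merged does not depend on the block. -/
theorem etaStar_E_transfer (D : BlockData P k) {c d : Fin k} {x y : G}
    (h : etaStar (ReesMatrix G n m P) (E D c d x) (E D c d y)) (c' d' : Fin k) :
    etaStar (ReesMatrix G n m P) (E D c' d' x) (E D c' d' y) := by
  let ρ := etaStar (ReesMatrix G n m P)
  have := ρ.mul (ρ.mul (ρ.refl (E D c' c 1)) h) (ρ.refl (E D d d' 1))
  simpa only [E_mul_E, one_mul, mul_one] using this

/-- A Mal'cev cycle in `G` gives an `η`-relation in each diagonal block. -/
theorem etaStar_E_of_cycle (D : BlockData P k) (c : Fin k) (x y : G) (z : ℕ → G) (t : ℕ)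
    (ht : 1 < t) (h : malcev x y z t = (x, y)) :
    etaStar (ReesMatrix G n m P) (E D c c x) (E D c c y) := by
  refine etaStar_of_etaN ht.le (.inr ⟨ht, fun u => (E D c c (z u) : ReesMatrix G n m P), ?_⟩)
  rw [malcev_map (fun g => ((E D c c g : ReesMatrix G n m P) : WithOne (ReesMatrix G n m P)))
    (fun a b => by rw [← WithOne.coe_mul, E_mul_E]), h]
  exact ⟨rfl, rfl⟩

/-! ### The isomorphism -/

/-- The structure group: the quotient of `G` by the congruence induced on a diagonal block, moved to
the universe `Type`. -/
theorem exists_structure_group [Finite G] (D : BlockData P k) (c₀ : Fin k) :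
    ∃ (H : Type) (_ : Group H) (_ : Finite H) (π : G →* H), Function.Surjective π ∧
      ∀ x y, π x = π y ↔ etaStar (ReesMatrix G n m P) (E D c₀ c₀ x) (E D c₀ c₀ y) := by
  let C : Con G := (etaStar (ReesMatrix G n m P)).comap (E D c₀ c₀)
    (fun x y => (E_mul_E D c₀ c₀ c₀ x y).symm)
  have : Finite C.Quotient := Finite.of_surjective _ C.mk'_surjective
  let e : C.Quotient ≃* Shrink.{0} C.Quotient :=
    (show Shrink.{0} C.Quotient ≃* C.Quotient from Shrink.mulEquiv).symm
  refine ⟨Shrink.{0} C.Quotient, inferInstance, Finite.of_equiv _ e.toEquiv,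
    e.toMonoidHom.comp C.mk', e.surjective.comp C.mk'_surjective, fun x y => ?_⟩
  exact e.injective.eq_iff.trans C.eq

/-- Given a set-theoretic section `σ` of `G → H`, the map `M⁰(H,k,k;I_k) → M/η*`,
`(h; c, d) ↦ [E c d (σ h)]`. -/
def fromBrandt {H : Type} [Group H] (D : BlockData P k) (σ : H → G) :
    ReesMatrix H k k (fun j i => if (j : ℕ) = (i : ℕ) then some (1 : H) else none) →
      (etaStar (ReesMatrix G n m P)).Quotient
  | theta => ((theta : ReesMatrix G n m P) : (etaStar (ReesMatrix G n m P)).Quotient)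
  | elem h c d => ((E D c d (σ h) : ReesMatrix G n m P) : (etaStar (ReesMatrix G n m P)).Quotient)

end ReesMatrix

/-- If the finite regular Rees matrix semigroup `M⁰(G,n,m;P)` over a
finite group `G` is CS-diagonal and `k` is the number of equivalence classes of
the row relation `~`, then `M/η* ≅ M⁰(H,k,k;I_k)` for some finite nilpotent
group `H`, where `I_k` is the identity sandwich matrix. -/
theorem quotient_etaStar_csDiagonal (G : Type*) [Group G] [Finite G]
    (n m : ℕ) (hn : 0 < n) (hm : 0 < m) (P : Fin m → Fin n → Option G)
    (hreg : IsRegularSandwich P) (hdiag : IsCSDiagonal P) :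
    ∃ (H : Type) (_ : Group H) (_ : Finite H), Group.IsNilpotent H ∧
      Nonempty
        ((etaStar (ReesMatrix G n m P)).Quotient ≃*
          ReesMatrix H (Nat.card (Quot (rowRel P))) (Nat.card (Quot (rowRel P)))
            (fun j i => if (j : ℕ) = (i : ℕ) then some (1 : H) else none)) := by
  obtain ⟨D⟩ := exists_blockData P hreg hdiag
  let c₀ := D.row ⟨0, hn⟩
  obtain ⟨H, _, _, π, hπ, hker⟩ := ReesMatrix.exists_structure_group D c₀
  refine ⟨H, inferInstance, inferInstance, isNilpotent_of_malcev_cycles π hπ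
    fun x y z t ht h => (hker x y).2 (ReesMatrix.etaStar_E_of_cycle D c₀ x y z t ht h), ?_⟩
  choose σ hσ using hπ
  refine ⟨(MulEquiv.ofBijective (MulHom.mk (ReesMatrix.fromBrandt D σ) ?_) ⟨?_, ?_⟩).symm⟩
  · rintro (_ | ⟨h, c, d⟩) (_ | ⟨h', c', d'⟩)
    · rfl
    · rfl
    · rfl
    · by_cases hd : d = c'
      · subst hd
        rw [ReesMatrix.elem_mul_elem (p := 1) (by simp)]
        simp only [ReesMatrix.fromBrandt]
        rw [← Con.coe_mul, ReesMatrix.E_mul_E, Con.eq]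
        refine ReesMatrix.etaStar_E_transfer D ((hker _ _).1 ?_) c d'
        simp [hσ]
      · rw [ReesMatrix.elem_mul_elem_none (by simpa [Fin.ext_iff] using hd)]
        simp only [ReesMatrix.fromBrandt]
        rw [← Con.coe_mul, ReesMatrix.E_mul_E_of_ne D hd]
  · rintro (_ | ⟨h, c, d⟩) (_ | ⟨h', c', d'⟩) heq
    · rfl
    · have := ReesMatrix.tag_eq_of_etaStar D ((Con.eq _).1 heq)
      rw [ReesMatrix.tag_E] at this
      cases this
    · have := ReesMatrix.tag_eq_of_etaStar D ((Con.eq _).1 heq)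
      rw [ReesMatrix.tag_E] at this
      cases this
    · have hrel := (Con.eq _).1 heq
      have := ReesMatrix.tag_eq_of_etaStar D hrel
      rw [ReesMatrix.tag_E, ReesMatrix.tag_E] at this
      cases this
      have h2 := (hker _ _).2 (ReesMatrix.etaStar_E_transfer D hrel c₀ c₀)
      rw [hσ, hσ] at h2
      rw [h2]
  · intro q
    induction q using Con.induction_on with
    | H x =>
      rcases x with _ | ⟨g, i, j⟩
      · exact ⟨.theta, rfl⟩
      · obtain ⟨x, hx⟩ := ReesMatrix.exists_etaStar_E D g i j
        refine ⟨.elem (π x) (D.row i) (D.col j), ((Con.eq _).2 ?_)⟩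
        refine (etaStar _).trans ?_ ((etaStar _).symm hx)
        exact ReesMatrix.etaStar_E_transfer D ((hker _ _).1 (hσ _)) _ _
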